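/- Let m ≥ 2 be an integer and B_1, B_2 > 1 real numbers with B_2 ≤ B_1. Let U = { x ∈ (0,1) irrational : for infinitely many n ∈ ℕ, 1 ≤ a_n(x)·a_{n+1}(x)⋯a_{n+m−2}(x) ≤ B_2^n and a_{n+m−1}(x) ≥ B_1^n/(a_n(x)·a_{n+1}(x)⋯a_{n+m−2}(x)) }. Then dim_H U ≤ g_{B_1,B_2}. -/

import Mathlib

open Filter MeasureTheory Set

/-- The Gauss map `T(x) = 1/x - ⌊1/x⌋`. -/
noncomputable def gaussMap (x : ℝ) : ℝ := 1 / x - (⌊1 / x⌋ : ℤ)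

/-- The `n`-th partial quotient `a_n(x)` (for `n ≥ 1`) of the continued
fraction expansion of `x`: `a_n(x) = ⌊1 / T^{n-1}(x)⌋`. -/
noncomputable def pq (x : ℝ) (n : ℕ) : ℕ := ⌊1 / (gaussMap^[n - 1] x)⌋₊

/-- The continuant `q_n(a_1, …, a_n)`: `q_0 = 1`, `q_1 = a_1`,
`q_k = a_k q_{k-1} + q_{k-2}`. -/
def contQ : (n : ℕ) → (Fin n → ℕ) → ℕ
  | 0, _ => 1
  | 1, a => a 0
  | (n + 2), a =>
      a (Fin.last (n + 1)) * contQ (n + 1) (Fin.init a) +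
        contQ n (Fin.init (Fin.init a))

/-- `s_B`: the Wang–Wu pressure exponent. -/
noncomputable def sExp (B : ℝ) : ℝ :=
  sInf {s : ℝ | 0 ≤ s ∧
    Filter.atTop.limsup (fun n : ℕ =>
      (((n : ℝ)⁻¹ : ℝ) : EReal) * ENNReal.log (∑' a : Fin n → ℕ+,
        ENNReal.ofReal ((B ^ n * ((contQ n fun i => (a i : ℕ)) : ℝ) ^ 2) ^ (-s)))) ≤ 0}

/-- `g_{B₁,B₂}`: the two-parameter pressure exponent. -/
noncomputable def gExp (B₁ B₂ : ℝ) : ℝ :=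
  sInf {s : ℝ | 0 ≤ s ∧
    Filter.atTop.limsup (fun n : ℕ =>
      (((n : ℝ)⁻¹ : ℝ) : EReal) * ENNReal.log (∑' a : Fin n → ℕ+,
        ENNReal.ofReal (B₂ ^ ((1 - s) * (n : ℝ)) *
          (B₁ ^ n * ((contQ n fun i => (a i : ℕ)) : ℝ) ^ 2) ^ (-s)))) ≤ 0}

/-!
Let `n = k + 1` and `M = m - 1`. Group the points of `U` by their first `k` partial quotients `a`
and the next `M` partial quotients `b`. In such a group every `x` satisfies
`T^{k+M} x ≤ ∏ b / B₁ⁿ`, and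
`|x - y| = (∏_{i<k+M} T^i x) (∏_{i<k+M} T^i y) |T^{k+M} x - T^{k+M} y|`, so its diameter is at most
`(B₁ⁿ q_k(a)² ∏ b)⁻¹`. Since `∏ b ≤ B₂ⁿ`, for `s ≤ 1` one has
`(∏ b)^{-(s+ε)} ≤ B₂^{(1-s)n} (∏ b)^{-(1+ε)}`; summing the `(s+ε)`-th powers of the diameters over
`b` costs a constant factor `ζ(1+ε)^M`, and what remains is summed over `a` to at most a constant
times `B₁^{-εk}` times the `k`-th sum in the definition of `g_{B₁,B₂}`. The covering sums thus decay
exponentially as soon as the pressure at `s` is nonpositive, and a Borel–Cantelli argument for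
Hausdorff measure gives `dim_H U ≤ s + ε`. If `s ≥ 1` there is nothing to prove.
-/

open ExpGrowth
open scoped ENNReal NNReal Topology

/-! ### Limsup sets and Hausdorff measure -/

section HausdorffCantelli

variable {X : Type*} [EMetricSpace X] {ι : ℕ → Type*} [∀ n, Countable (ι n)] {d : ℝ}
  {t : ∀ n, ι n → Set X}

theorem hausdorffMeasure_setOf_frequently_eq_zero [MeasurableSpace X] [BorelSpace X] (hd : 0 < d)
    {u : ℕ → ℝ≥0∞} (hu : ∑' n, u n ≠ ∞)
    (h : ∀ᶠ n in atTop, ∑' i, Metric.ediam (t n i) ^ d ≤ u n) :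
    μH[d] {x | ∃ᶠ n in atTop, ∃ i, x ∈ t n i} = 0 := by
  obtain ⟨N₀, hN₀⟩ := eventually_atTop.1 h
  have tail_tendsto : Tendsto (fun N ↦ ∑' k, u (k + N)) atTop (𝓝 0) :=
    ENNReal.tendsto_sum_nat_add u hu
  have radius_tendsto : Tendsto (fun N ↦ (∑' k, u (k + N)) ^ d⁻¹) atTop (𝓝 0) := by
    simpa [hd] using tail_tendsto.ennrpow_const d⁻¹
  have ediam_le : ∀ N ≥ N₀, ∀ p : Σ k, ι (k + N),
      Metric.ediam (t (p.1 + N) p.2) ≤ (∑' k, u (k + N)) ^ d⁻¹ := fun N hN ⟨k, i⟩ ↦ by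
    rw [ENNReal.le_rpow_inv_iff hd]
    calc Metric.ediam (t (k + N) i) ^ d
        ≤ ∑' i, Metric.ediam (t (k + N) i) ^ d := ENNReal.le_tsum i
      _ ≤ u (k + N) := hN₀ _ (by lia)
      _ ≤ ∑' k, u (k + N) := ENNReal.le_tsum k
  have subset_iUnion (N : ℕ) :
      {x | ∃ᶠ n in atTop, ∃ i, x ∈ t n i} ⊆ ⋃ p : Σ k, ι (k + N), t (p.1 + N) p.2 := fun x hx ↦ by
    obtain ⟨n, hn, i, hi⟩ := frequently_atTop.1 hx N
    obtain ⟨k, rfl⟩ := Nat.exists_eq_add_of_le' hn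
    exact mem_iUnion.2 ⟨⟨k, i⟩, hi⟩
  refine le_antisymm ?_ zero_le
  calc μH[d] {x | ∃ᶠ n in atTop, ∃ i, x ∈ t n i}
      ≤ liminf (fun N ↦ ∑' p : Σ k, ι (k + N), Metric.ediam (t (p.1 + N) p.2) ^ d) atTop :=
        Measure.hausdorffMeasure_le_liminf_tsum _ _ _ radius_tendsto _
          (eventually_atTop.2 ⟨N₀, ediam_le⟩) (Eventually.of_forall subset_iUnion)
    _ ≤ liminf (fun N ↦ ∑' k, u (k + N)) atTop := by
        refine liminf_le_liminf (eventually_atTop.2 ⟨N₀, fun N hN ↦ ?_⟩)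
        rw [ENNReal.tsum_sigma']
        exact ENNReal.tsum_le_tsum fun k ↦ hN₀ _ (by lia)
    _ = 0 := tail_tendsto.liminf_eq

theorem exists_lt_one_eventually_le_pow_of_expGrowthSup_neg {u : ℕ → ℝ≥0∞}
    (hu : expGrowthSup u < 0) : ∃ r < 1, ∀ᶠ n in atTop, u n ≤ r ^ n := by
  obtain ⟨c, huc, hc⟩ := exists_between hu
  refine ⟨c.exp, EReal.exp_lt_one_iff.2 hc, (eventually_le_exp huc).mono fun n hn ↦ ?_⟩
  rwa [← EReal.exp_nmul, mul_comm]

theorem dimH_setOf_frequently_le_of_expGrowthSup_neg (hd : 0 < d)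
    (h : expGrowthSup (fun n ↦ ∑' i, Metric.ediam (t n i) ^ d) < 0) :
    dimH {x | ∃ᶠ n in atTop, ∃ i, x ∈ t n i} ≤ ENNReal.ofReal d := by
  borelize X
  obtain ⟨r, hr, hle⟩ := exists_lt_one_eventually_le_pow_of_expGrowthSup_neg h
  have geometric_ne_top : ∑' n, r ^ n ≠ ∞ := by
    rw [ENNReal.tsum_geometric, ENNReal.inv_ne_top]
    exact (tsub_pos_of_lt hr).ne'
  refine dimH_le_of_hausdorffMeasure_ne_top ?_
  rw [Real.coe_toNNReal _ hd.le, hausdorffMeasure_setOf_frequently_eq_zero hd geometric_ne_top hle]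
  exact ENNReal.zero_ne_top

end HausdorffCantelli

/-! ### Partial quotients and continuants -/

/-- The irrational points of the unit interval, on which the Gauss map and all partial quotients
behave without junk values. -/
def unitIrrationals : Set ℝ := {x | x ∈ Ioo 0 1 ∧ Irrational x}

section ContinuedFraction

variable {x y : ℝ}

theorem gaussMap_mem_unitIrrationals (hx : Irrational x) : gaussMap x ∈ unitIrrationals := by
  have irrational : Irrational (gaussMap x) := by
    rw [gaussMap, one_div]
    exact (irrational_inv_iff.2 hx).sub_intCast _
  exact ⟨⟨(Int.fract_nonneg (1 / x)).lt_of_ne' irrational.ne_zero, Int.fract_lt_one (1 / x)⟩,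
    irrational⟩

theorem iterate_gaussMap_mem_unitIrrationals (hx : x ∈ unitIrrationals) (k : ℕ) :
    gaussMap^[k] x ∈ unitIrrationals :=
  MapsTo.iterate (fun _ hy ↦ gaussMap_mem_unitIrrationals hy.2) k hx

theorem iterate_gaussMap_pos (hx : x ∈ unitIrrationals) (k : ℕ) : 0 < gaussMap^[k] x :=
  (iterate_gaussMap_mem_unitIrrationals hx k).1.1

theorem prod_iterate_gaussMap_nonneg (hx : x ∈ unitIrrationals) (k : ℕ) :
    0 ≤ ∏ i ∈ Finset.range k, gaussMap^[i] x :=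
  Finset.prod_nonneg fun i _ ↦ (iterate_gaussMap_pos hx i).le

theorem pq_succ_pos (hx : x ∈ unitIrrationals) (k : ℕ) : 0 < pq x (k + 1) := by
  obtain ⟨⟨pos, lt_one⟩, -⟩ := iterate_gaussMap_mem_unitIrrationals hx k
  rw [pq, Nat.add_sub_cancel, Nat.floor_pos]
  exact (one_le_div pos).2 lt_one.le

theorem iterate_gaussMap_mul_pq_add (hx : x ∈ unitIrrationals) (k : ℕ) :
    gaussMap^[k] x * (pq x (k + 1) + gaussMap^[k + 1] x) = 1 := by
  have pos := iterate_gaussMap_pos hx k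
  rw [Function.iterate_succ_apply', pq, Nat.add_sub_cancel, gaussMap,
    natCast_floor_eq_intCast_floor (by positivity), add_sub_cancel, mul_one_div_cancel pos.ne']

theorem iterate_gaussMap_le_inv_pq (hx : x ∈ unitIrrationals) (k : ℕ) :
    gaussMap^[k] x ≤ (pq x (k + 1) : ℝ)⁻¹ := by
  have pq_pos : (0 : ℝ) < pq x (k + 1) := by exact_mod_cast pq_succ_pos hx k
  rw [eq_inv_of_mul_eq_one_left (iterate_gaussMap_mul_pq_add hx k)]
  gcongr
  linarith [iterate_gaussMap_pos hx (k + 1)]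

theorem contQ_add_two (a : ℕ → ℕ) (k : ℕ) :
    (contQ (k + 2) fun i ↦ a i) =
      a (k + 1) * (contQ (k + 1) fun i ↦ a i) + contQ k fun i ↦ a i :=
  rfl

theorem prod_le_contQ : ∀ (k : ℕ) (a : Fin k → ℕ), ∏ i, a i ≤ contQ k a
  | 0, _ => by simp [contQ]
  | 1, _ => by simp [contQ]
  | k + 2, a => by
    rw [Fin.prod_univ_castSucc, mul_comm, contQ]
    exact le_add_right (Nat.mul_le_mul_left _ (prod_le_contQ (k + 1) (Fin.init a)))

theorem contQ_pos {k : ℕ} {a : Fin k → ℕ} (ha : ∀ i, 0 < a i) : 0 < contQ k a :=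
  (Finset.prod_pos fun i _ ↦ ha i).trans_le (prod_le_contQ k a)

theorem prod_iterate_gaussMap_mul_contQ_add (hx : x ∈ unitIrrationals) (k : ℕ) :
    (∏ i ∈ Finset.range (k + 1), gaussMap^[i] x) *
      ((contQ (k + 1) fun i ↦ pq x (i + 1)) +
        (contQ k fun i ↦ pq x (i + 1)) * gaussMap^[k + 1] x) = 1 := by
  induction k with
  | zero => simpa [contQ] using iterate_gaussMap_mul_pq_add hx 0
  | succ k ih =>
    rw [Finset.prod_range_succ, contQ_add_two fun i ↦ pq x (i + 1)]
    push_cast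
    linear_combination ih + (∏ i ∈ Finset.range (k + 1), gaussMap^[i] x) *
      (contQ (k + 1) fun i ↦ pq x (i + 1)) * iterate_gaussMap_mul_pq_add hx (k + 1)

theorem prod_iterate_gaussMap_le_inv_contQ (hx : x ∈ unitIrrationals) :
    ∀ k, ∏ i ∈ Finset.range k, gaussMap^[i] x ≤ ((contQ k fun i ↦ pq x (i + 1) : ℕ) : ℝ)⁻¹
  | 0 => by simp [contQ]
  | k + 1 => by
    have contQ_pos : (0 : ℝ) < contQ (k + 1) fun i ↦ pq x (i + 1) := by
      exact_mod_cast contQ_pos fun i : Fin (k + 1) ↦ pq_succ_pos hx i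
    have iterate_nonneg := (iterate_gaussMap_pos hx (k + 1)).le
    rw [eq_inv_of_mul_eq_one_left (prod_iterate_gaussMap_mul_contQ_add hx k)]
    gcongr
    exact le_add_of_nonneg_right (by positivity)

theorem prod_iterate_gaussMap_le_inv_contQ_mul_prod (hx : x ∈ unitIrrationals) (k M : ℕ) :
    ∏ i ∈ Finset.range (k + M), gaussMap^[i] x ≤
      ((contQ k fun i ↦ pq x (i + 1)) * ∏ j ∈ Finset.range M, (pq x (k + j + 1) : ℝ))⁻¹ := by
  rw [Finset.prod_range_add, mul_inv, ← Finset.prod_inv_distrib]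
  gcongr with j
  · exact Finset.prod_nonneg fun _ _ ↦ (iterate_gaussMap_pos hx _).le
  · exact prod_iterate_gaussMap_le_inv_contQ hx k
  · exact fun _ _ ↦ (iterate_gaussMap_pos hx _).le
  · exact iterate_gaussMap_le_inv_pq hx (k + j)

theorem abs_sub_eq_prod_iterate_gaussMap_mul (hx : x ∈ unitIrrationals) (hy : y ∈ unitIrrationals)
    {k : ℕ} (h : ∀ i < k, pq x (i + 1) = pq y (i + 1)) :
    |x - y| = (∏ i ∈ Finset.range k, gaussMap^[i] x) * (∏ i ∈ Finset.range k, gaussMap^[i] y) *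
      |gaussMap^[k] x - gaussMap^[k] y| := by
  induction k with
  | zero => simp
  | succ k ih =>
    have hxk := iterate_gaussMap_mul_pq_add hx k
    have hyk := iterate_gaussMap_mul_pq_add hy k
    rw [← h k (by lia)] at hyk
    have sub_eq : gaussMap^[k] x - gaussMap^[k] y = -(gaussMap^[k] x * gaussMap^[k] y) *
        (gaussMap^[k + 1] x - gaussMap^[k + 1] y) := by
      linear_combination -gaussMap^[k] x * hyk + gaussMap^[k] y * hxk
    rw [ih fun i hi ↦ h i (by lia), Finset.prod_range_succ, Finset.prod_range_succ, sub_eq, abs_mul,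
      abs_neg, abs_of_pos (mul_pos (iterate_gaussMap_pos hx k) (iterate_gaussMap_pos hy k))]
    ring

theorem abs_sub_le_of_pq_eq (hx : x ∈ unitIrrationals) (hy : y ∈ unitIrrationals) {k M : ℕ}
    (h : ∀ i < k + M, pq x (i + 1) = pq y (i + 1)) {δ : ℝ}
    (hxδ : gaussMap^[k + M] x ≤ δ) (hyδ : gaussMap^[k + M] y ≤ δ) :
    |x - y| ≤
      ((contQ k fun i ↦ pq x (i + 1)) *
        ∏ j ∈ Finset.range M, (pq x (k + j + 1) : ℝ))⁻¹ ^ 2 * δ := by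
  have contQ_eq : (contQ k fun i ↦ pq x (i + 1)) = contQ k fun i ↦ pq y (i + 1) :=
    congrArg (contQ k) (funext fun i ↦ h i (by lia))
  have prod_eq : ∏ j ∈ Finset.range M, (pq x (k + j + 1) : ℝ) =
      ∏ j ∈ Finset.range M, (pq y (k + j + 1) : ℝ) :=
    Finset.prod_congr rfl fun j hj ↦ by rw [h (k + j) (by grind)]
  have prod_x_le := prod_iterate_gaussMap_le_inv_contQ_mul_prod hx k M
  have prod_y_le := prod_iterate_gaussMap_le_inv_contQ_mul_prod hy k M
  rw [← contQ_eq, ← prod_eq] at prod_y_le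
  rw [abs_sub_eq_prod_iterate_gaussMap_mul hx hy h, sq]
  gcongr
  · exact prod_iterate_gaussMap_nonneg hy _
  · exact abs_sub_le_of_nonneg_of_le (iterate_gaussMap_pos hx _).le hxδ
      (iterate_gaussMap_pos hy _).le hyδ

end ContinuedFraction

/-! ### The pressure sums -/

/-- The `n`-th partition sum `∑_{a₁,…,aₙ} B₂^{(1-s)n} (B₁ⁿ qₙ²)^{-s}`, whose exponential growth rate
is the pressure function defining `g_{B₁,B₂}`. -/
noncomputable def pressureSum (B₁ B₂ s : ℝ) (n : ℕ) : ℝ≥0∞ :=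
  ∑' a : Fin n → ℕ+, ENNReal.ofReal (B₂ ^ ((1 - s) * (n : ℝ)) *
    (B₁ ^ n * ((contQ n fun i ↦ (a i : ℕ)) : ℝ) ^ 2) ^ (-s))

/-- The Dirichlet series `ζ(p) = ∑_{a ≥ 1} a^{-p}` as an extended nonnegative real. -/
noncomputable def pnatZeta (p : ℝ) : ℝ≥0∞ := ∑' a : ℕ+, ENNReal.ofReal ((a : ℝ) ^ (-p))

theorem gExp_eq_sInf_expGrowthSup (B₁ B₂ : ℝ) :
    gExp B₁ B₂ = sInf {s | 0 ≤ s ∧ expGrowthSup (pressureSum B₁ B₂ s) ≤ 0} := by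
  simp only [gExp, expGrowthSup, pressureSum, div_eq_mul_inv, mul_comm, EReal.coe_inv,
    EReal.coe_natCast]

theorem pnatZeta_ne_top {p : ℝ} (hp : 1 < p) : pnatZeta p ≠ ∞ := by
  have summable : Summable fun a : ℕ+ ↦ (a : ℝ) ^ (-p) :=
    (Real.summable_nat_rpow.2 (neg_lt_neg hp)).comp_injective PNat.coe_injective
  exact summable.tsum_ofReal_ne_top

theorem tsum_prod_fin {α : Type*} (f : α → ℝ≥0∞) (n : ℕ) :
    ∑' a : Fin n → α, ∏ i, f (a i) = (∑' a, f a) ^ n := by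
  induction n with
  | zero => simp
  | succ n ih =>
    rw [← (Fin.consEquiv fun _ : Fin (n + 1) ↦ α).tsum_eq, ENNReal.tsum_prod']
    simp only [Fin.consEquiv, Equiv.coe_fn_mk, Fin.prod_univ_succ, Fin.cons_zero, Fin.cons_succ,
      ENNReal.tsum_mul_left, ENNReal.tsum_mul_right, ih, pow_succ']

theorem tsum_ofReal_prod_rpow_neg (p : ℝ) (n : ℕ) :
    ∑' a : Fin n → ℕ+, ENNReal.ofReal ((∏ i, (a i : ℝ)) ^ (-p)) = pnatZeta p ^ n := by
  rw [pnatZeta, ← tsum_prod_fin]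
  refine tsum_congr fun a ↦ ?_
  rw [← ENNReal.ofReal_prod_of_nonneg fun _ _ ↦ by positivity,
    Real.finsetProd_rpow _ _ fun _ _ ↦ by positivity]

theorem pressureSum_le_pow {B₁ B₂ s : ℝ} (hB₁ : 0 < B₁) (hB₂ : 1 ≤ B₂) (hs : 1 ≤ s) (n : ℕ) :
    pressureSum B₁ B₂ s n ≤ (ENNReal.ofReal (B₁ ^ (-s)) * pnatZeta 2) ^ n := by
  rw [mul_pow, ← tsum_ofReal_prod_rpow_neg, ← ENNReal.ofReal_pow (by positivity),
    ← ENNReal.tsum_mul_left]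
  refine ENNReal.tsum_le_tsum fun a ↦ ?_
  rw [← ENNReal.ofReal_mul (by positivity)]
  refine ENNReal.ofReal_le_ofReal ?_
  set q := ((contQ n fun i ↦ (a i : ℕ)) : ℝ)
  set P : ℝ := ∏ i, (a i : ℝ)
  have one_le_q : 1 ≤ q := Nat.one_le_cast.2 (contQ_pos fun i ↦ (a i).pos)
  have P_le_q : P ≤ q := calc
    P = (∏ i, (a i : ℕ) : ℕ) := (Nat.cast_prod _ _).symm
    _ ≤ q := Nat.cast_le.2 (prod_le_contQ n _)
  have P_pos : 0 < P := Finset.prod_pos fun i _ ↦ by exact_mod_cast (a i).pos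
  have B₂_factor_le_one : B₂ ^ ((1 - s) * (n : ℝ)) ≤ 1 :=
    Real.rpow_le_one_of_one_le_of_nonpos hB₂
      (mul_nonpos_of_nonpos_of_nonneg (by linarith) n.cast_nonneg)
  have B₁_factor_eq : (B₁ ^ n) ^ (-s) = (B₁ ^ (-s)) ^ n := (Real.rpow_pow_comm hB₁.le _ _).symm
  have q_factor_le : (q ^ 2) ^ (-s) ≤ P ^ (-2 : ℝ) := calc
    (q ^ 2) ^ (-s) ≤ (q ^ 2) ^ (-1 : ℝ) := by
      gcongr
      exact one_le_pow₀ one_le_q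
    _ ≤ (P ^ 2) ^ (-1 : ℝ) := Real.rpow_le_rpow_of_nonpos (by positivity) (by gcongr) (by norm_num)
    _ = P ^ (-2 : ℝ) := by
      rw [← Real.rpow_natCast, ← Real.rpow_mul P_pos.le]
      norm_num
  rw [Real.mul_rpow (by positivity) (by positivity), B₁_factor_eq]
  calc B₂ ^ ((1 - s) * (n : ℝ)) * ((B₁ ^ (-s)) ^ n * (q ^ 2) ^ (-s))
      ≤ 1 * ((B₁ ^ (-s)) ^ n * P ^ (-2 : ℝ)) := by gcongr
    _ = (B₁ ^ (-s)) ^ n * P ^ (-2 : ℝ) := one_mul _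

theorem exists_expGrowthSup_pressureSum_le_zero {B₁ B₂ : ℝ} (hB₁ : 1 < B₁) (hB₂ : 1 ≤ B₂) :
    ∃ s, 0 ≤ s ∧ expGrowthSup (pressureSum B₁ B₂ s) ≤ 0 := by
  have base_tendsto :
      Tendsto (fun s : ℝ ↦ ENNReal.ofReal (B₁ ^ (-s)) * pnatZeta 2) atTop (𝓝 0) := by
    have rpow_tendsto : Tendsto (fun s : ℝ ↦ B₁ ^ (-s)) atTop (𝓝 0) :=
      (tendsto_rpow_atBot_of_base_gt_one B₁ hB₁).comp tendsto_neg_atTop_atBot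
    simpa using ENNReal.Tendsto.mul_const (ENNReal.tendsto_ofReal rpow_tendsto)
      (.inr (pnatZeta_ne_top one_lt_two))
  obtain ⟨s, base_le_one, hs⟩ :=
    ((base_tendsto.eventually_le_const one_pos).and (eventually_ge_atTop 1)).exists
  refine ⟨s, by linarith, ?_⟩
  calc expGrowthSup (pressureSum B₁ B₂ s)
      ≤ expGrowthSup fun n ↦ (ENNReal.ofReal (B₁ ^ (-s)) * pnatZeta 2) ^ n :=
        expGrowthSup_monotone (pressureSum_le_pow (by linarith) hB₂ hs)
    _ = (ENNReal.ofReal (B₁ ^ (-s)) * pnatZeta 2).log := expGrowthSup_pow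
    _ ≤ 0 := ENNReal.log_le_zero_iff.2 base_le_one

/-! ### The limsup set and its covering -/

/-- The points `x` having infinitely many `n` such that the product of the `M` partial quotients
starting at `a_n(x)` is at most `B₂ⁿ`, while its product with the next one is at least `B₁ⁿ`.
The set `U` of the theorem is the case `M = m - 1`. -/
def largeBlockSet (M : ℕ) (B₁ B₂ : ℝ) : Set ℝ :=
  {x ∈ unitIrrationals | {n : ℕ | ∏ i ∈ Finset.range M, (pq x (n + i) : ℝ) ≤ B₂ ^ n ∧
    B₁ ^ n / ∏ i ∈ Finset.range M, (pq x (n + i) : ℝ) ≤ pq x (n + M)}.Infinite}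

/-- The points that satisfy the condition defining `largeBlockSet` at `n = k + 1`, and whose partial
quotients are prescribed by `a` at the indices `1, …, k` and by `b` at `k + 1, …, k + M`. -/
def largeBlockCylinder (B₁ B₂ : ℝ) {k M : ℕ} (a : Fin k → ℕ+) (b : Fin M → ℕ+) : Set ℝ :=
  {x ∈ unitIrrationals |
    (∀ i : Fin k, pq x (i + 1) = a i) ∧ (∀ j : Fin M, pq x (k + j + 1) = b j) ∧
    ∏ j, (b j : ℝ) ≤ B₂ ^ (k + 1) ∧ B₁ ^ (k + 1) / ∏ j, (b j : ℝ) ≤ pq x (k + M + 1)}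

theorem largeBlockSet_subset_setOf_frequently (M : ℕ) (B₁ B₂ : ℝ) :
    largeBlockSet M B₁ B₂ ⊆ {x | ∃ᶠ k in atTop, ∃ c : (Fin k → ℕ+) × (Fin M → ℕ+),
      x ∈ largeBlockCylinder B₁ B₂ c.1 c.2} := by
  rintro x ⟨hx, infinite⟩
  refine frequently_atTop.2 fun N ↦ ?_
  obtain ⟨n, ⟨prod_le, le_pq⟩, hn⟩ := infinite.exists_gt N
  obtain ⟨k, rfl⟩ := Nat.exists_eq_add_one_of_ne_zero (Nat.ne_zero_of_lt hn)
  refine ⟨k, by lia, (fun i ↦ ⟨pq x (i + 1), pq_succ_pos hx i⟩,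
    fun j ↦ ⟨pq x (k + j + 1), pq_succ_pos hx _⟩), hx, fun i ↦ rfl, fun j ↦ rfl, ?_, ?_⟩
  · simpa [Finset.prod_range, Nat.add_right_comm] using prod_le
  · simpa [Finset.prod_range, Nat.add_right_comm] using le_pq

section Covering

variable {B₁ B₂ : ℝ} {k M : ℕ} {a : Fin k → ℕ+} {b : Fin M → ℕ+}

theorem abs_sub_le_of_mem_largeBlockCylinder (hB₁ : 0 < B₁) {x y : ℝ}
    (hx : x ∈ largeBlockCylinder B₁ B₂ a b) (hy : y ∈ largeBlockCylinder B₁ B₂ a b) :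
    |x - y| ≤ (B₁ ^ (k + 1) * (contQ k fun i ↦ (a i : ℕ)) ^ 2 * ∏ j, (b j : ℝ))⁻¹ := by
  have iterate_le {z : ℝ} (hz : z ∈ largeBlockCylinder B₁ B₂ a b) :
      gaussMap^[k + M] z ≤ (∏ j, (b j : ℝ)) / B₁ ^ (k + 1) := by
    obtain ⟨hz, -, -, -, le_pq⟩ := hz
    rw [← inv_div]
    exact (iterate_gaussMap_le_inv_pq hz _).trans (inv_anti₀ (by positivity) le_pq)
  have pq_eq (i : ℕ) (hi : i < k + M) : pq x (i + 1) = pq y (i + 1) := by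
    obtain hik | ⟨j, rfl⟩ := (lt_or_ge i k).imp_right Nat.exists_eq_add_of_le
    · rw [hx.2.1 ⟨i, hik⟩, hy.2.1 ⟨i, hik⟩]
    · rw [hx.2.2.1 ⟨j, by lia⟩, hy.2.2.1 ⟨j, by lia⟩]
  refine (abs_sub_le_of_pq_eq hx.1 hy.1 pq_eq (iterate_le hx) (iterate_le hy)).trans_eq ?_
  simp only [Finset.prod_range, hx.2.1, hx.2.2.1]
  field_simp

theorem ediam_largeBlockCylinder_le (hB₁ : 0 < B₁) (a : Fin k → ℕ+) (b : Fin M → ℕ+) :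
    Metric.ediam (largeBlockCylinder B₁ B₂ a b) ≤ ENNReal.ofReal
      (B₁ ^ (k + 1) * (contQ k fun i ↦ (a i : ℕ)) ^ 2 * ∏ j, (b j : ℝ))⁻¹ :=
  Metric.ediam_le fun x hx y hy ↦ by
    rw [edist_dist, Real.dist_eq]
    exact ENNReal.ofReal_le_ofReal (abs_sub_le_of_mem_largeBlockCylinder hB₁ hx hy)

theorem rpow_neg_add_le_mul_rpow {P C s ε : ℝ} (hP : 0 < P) (hPC : P ≤ C) (hs : s ≤ 1) :
    P ^ (-(s + ε)) ≤ C ^ (1 - s) * P ^ (-(1 + ε)) := by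
  rw [show -(s + ε) = (1 - s) + -(1 + ε) by ring, Real.rpow_add hP]
  gcongr

theorem inv_rpow_add_le_mul_pressure_term {s ε P q : ℝ} (hB₁ : 1 ≤ B₁) (hB₂ : 0 ≤ B₂)
    (hs₀ : 0 ≤ s) (hs₁ : s ≤ 1) (hε : 0 ≤ ε) (hP : 0 < P) (hPB : P ≤ B₂ ^ (k + 1)) (hq : 1 ≤ q) :
    (B₁ ^ (k + 1) * q ^ 2 * P)⁻¹ ^ (s + ε) ≤
      B₂ ^ (1 - s) * (B₁ ^ (-ε)) ^ k *
        (B₂ ^ ((1 - s) * (k : ℝ)) * (B₁ ^ k * q ^ 2) ^ (-s)) * P ^ (-(1 + ε)) := by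
  have D_factor_le : (B₁ ^ k * q ^ 2) ^ (-(s + ε)) ≤
      (B₁ ^ k * q ^ 2) ^ (-s) * (B₁ ^ (-ε)) ^ k := by
    rw [neg_add, Real.rpow_add (by positivity), Real.rpow_pow_comm (by positivity)]
    refine mul_le_mul_of_nonneg_left (Real.rpow_le_rpow_of_nonpos (by positivity) ?_ (by linarith))
      (by positivity)
    exact le_mul_of_one_le_right (by positivity) (one_le_pow₀ hq)
  have B₂_factor_eq : (B₂ ^ (k + 1)) ^ (1 - s) = B₂ ^ ((1 - s) * (k : ℝ)) * B₂ ^ (1 - s) := by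
    rw [← Real.rpow_pow_comm hB₂, pow_succ, Real.rpow_mul hB₂, Real.rpow_natCast]
  calc (B₁ ^ (k + 1) * q ^ 2 * P)⁻¹ ^ (s + ε)
      ≤ (B₁ ^ k * q ^ 2 * P)⁻¹ ^ (s + ε) := by
        gcongr
        exact k.le_succ
    _ = (B₁ ^ k * q ^ 2) ^ (-(s + ε)) * P ^ (-(s + ε)) := by
        rw [Real.inv_rpow (by positivity), ← Real.rpow_neg (by positivity),
          Real.mul_rpow (by positivity) hP.le]
    _ ≤ (B₁ ^ k * q ^ 2) ^ (-s) * (B₁ ^ (-ε)) ^ k *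
          ((B₂ ^ (k + 1)) ^ (1 - s) * P ^ (-(1 + ε))) := by
        gcongr
        exact rpow_neg_add_le_mul_rpow hP hPB hs₁
    _ = _ := by
        rw [B₂_factor_eq]
        ring

theorem tsum_ediam_largeBlockCylinder_rpow_le {s ε : ℝ} (hB₁ : 1 ≤ B₁) (hB₂ : 0 ≤ B₂) (hs₀ : 0 ≤ s)
    (hs₁ : s ≤ 1) (hε : 0 < ε) (k M : ℕ) :
    ∑' c : (Fin k → ℕ+) × (Fin M → ℕ+),
        Metric.ediam (largeBlockCylinder B₁ B₂ c.1 c.2) ^ (s + ε) ≤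
      ENNReal.ofReal (B₂ ^ (1 - s)) * pnatZeta (1 + ε) ^ M *
        (ENNReal.ofReal (B₁ ^ (-ε)) ^ k * pressureSum B₁ B₂ s k) := by
  have term_le (a : Fin k → ℕ+) (b : Fin M → ℕ+) :
      Metric.ediam (largeBlockCylinder B₁ B₂ a b) ^ (s + ε) ≤
        ENNReal.ofReal (B₂ ^ (1 - s)) * ENNReal.ofReal (B₁ ^ (-ε)) ^ k *
          ENNReal.ofReal (B₂ ^ ((1 - s) * (k : ℝ)) *
            (B₁ ^ k * ((contQ k fun i ↦ (a i : ℕ)) : ℝ) ^ 2) ^ (-s)) *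
          ENNReal.ofReal ((∏ j, (b j : ℝ)) ^ (-(1 + ε))) := by
    obtain empty | ⟨x, hx⟩ := (largeBlockCylinder B₁ B₂ a b).eq_empty_or_nonempty
    · simp [empty, ENNReal.zero_rpow_of_pos (add_pos_of_nonneg_of_pos hs₀ hε)]
    have P_pos : 0 < ∏ j, (b j : ℝ) := Finset.prod_pos fun j _ ↦ by exact_mod_cast (b j).pos
    have one_le_q : (1 : ℝ) ≤ contQ k fun i ↦ (a i : ℕ) :=
      Nat.one_le_cast.2 (contQ_pos fun i ↦ (a i).pos)
    rw [← ENNReal.ofReal_pow (by positivity), ← ENNReal.ofReal_mul (by positivity),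
      ← ENNReal.ofReal_mul (by positivity), ← ENNReal.ofReal_mul (by positivity)]
    refine (ENNReal.rpow_le_rpow (ediam_largeBlockCylinder_le (by linarith) a b)
      (by linarith)).trans ?_
    rw [ENNReal.ofReal_rpow_of_nonneg (by positivity) (by linarith)]
    exact ENNReal.ofReal_le_ofReal
      (inv_rpow_add_le_mul_pressure_term hB₁ hB₂ hs₀ hs₁ hε.le P_pos hx.2.2.2.1 one_le_q)
  rw [ENNReal.tsum_prod']
  refine (ENNReal.tsum_le_tsum fun a ↦ ENNReal.tsum_le_tsum fun b ↦ term_le a b).trans_eq ?_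
  simp only [ENNReal.tsum_mul_left, ENNReal.tsum_mul_right, tsum_ofReal_prod_rpow_neg]
  rw [← pressureSum]
  ring

theorem expGrowthSup_tsum_ediam_largeBlockCylinder_neg {s ε : ℝ} (hB₁ : 1 < B₁) (hB₂ : 0 ≤ B₂)
    (hs₀ : 0 ≤ s) (hs₁ : s ≤ 1) (hε : 0 < ε) (M : ℕ)
    (hs : expGrowthSup (pressureSum B₁ B₂ s) ≤ 0) :
    expGrowthSup (fun k ↦ ∑' c : (Fin k → ℕ+) × (Fin M → ℕ+),
      Metric.ediam (largeBlockCylinder B₁ B₂ c.1 c.2) ^ (s + ε)) < 0 := by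
  have const_ne_top : ENNReal.ofReal (B₂ ^ (1 - s)) * pnatZeta (1 + ε) ^ M ≠ ∞ :=
    ENNReal.mul_ne_top ENNReal.ofReal_ne_top (ENNReal.pow_ne_top (pnatZeta_ne_top (by linarith)))
  have rate_neg : (ENNReal.ofReal (B₁ ^ (-ε))).log < 0 := by
    rw [ENNReal.log_lt_zero_iff, ENNReal.ofReal_lt_one]
    exact Real.rpow_lt_one_of_one_lt_of_neg hB₁ (by linarith)
  have rate_ne_bot : (ENNReal.ofReal (B₁ ^ (-ε))).log ≠ ⊥ := by
    rw [Ne, ENNReal.log_eq_bot_iff, ENNReal.ofReal_eq_zero, not_le]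
    positivity
  calc _ ≤ expGrowthSup ((fun k ↦ ENNReal.ofReal (B₁ ^ (-ε)) ^ k) * pressureSum B₁ B₂ s) :=
        expGrowthSup_le_of_eventually_le const_ne_top (Eventually.of_forall fun k ↦
          tsum_ediam_largeBlockCylinder_rpow_le hB₁.le hB₂ hs₀ hs₁ hε k M)
    _ ≤ (ENNReal.ofReal (B₁ ^ (-ε))).log + expGrowthSup (pressureSum B₁ B₂ s) := by
        rw [← expGrowthSup_pow]
        apply expGrowthSup_mul_le <;> rw [expGrowthSup_pow]
        · exact .inl rate_ne_bot
        · exact .inl rate_neg.ne_top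
    _ ≤ (ENNReal.ofReal (B₁ ^ (-ε))).log := add_le_of_nonpos_right hs
    _ < 0 := rate_neg

theorem dimH_largeBlockSet_le_of_expGrowthSup_le_zero {s : ℝ} (hB₁ : 1 < B₁) (hB₂ : 0 ≤ B₂)
    (hs₀ : 0 ≤ s) (M : ℕ) (hs : expGrowthSup (pressureSum B₁ B₂ s) ≤ 0) :
    dimH (largeBlockSet M B₁ B₂) ≤ ENNReal.ofReal s := by
  obtain hs₁ | hs₁ := le_total s 1
  · rw [ENNReal.le_ofReal_iff_toReal_le (Real.dimH_ne_top _) hs₀]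
    refine le_of_forall_pos_le_add fun ε hε ↦ ENNReal.toReal_le_of_le_ofReal (by linarith) ?_
    exact (dimH_mono (largeBlockSet_subset_setOf_frequently M B₁ B₂)).trans
      (dimH_setOf_frequently_le_of_expGrowthSup_neg (by linarith)
        (expGrowthSup_tsum_ediam_largeBlockCylinder_neg hB₁ hB₂ hs₀ hs₁ hε M hs))
  · calc dimH (largeBlockSet M B₁ B₂) ≤ dimH (univ : Set ℝ) := dimH_mono (subset_univ _)
      _ = 1 := Real.dimH_univ
      _ ≤ ENNReal.ofReal s := ENNReal.one_le_ofReal.2 hs₁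

end Covering

theorem upper_bound_U_general (M : ℕ) {B₁ B₂ : ℝ} (hB₁ : 1 < B₁) (hB₂ : 1 ≤ B₂) :
    dimH (largeBlockSet M B₁ B₂) ≤ ENNReal.ofReal (gExp B₁ B₂) := by
  rw [gExp_eq_sInf_expGrowthSup, ENNReal.le_ofReal_iff_toReal_le (Real.dimH_ne_top _)
    (Real.sInf_nonneg fun _ h ↦ h.1)]
  refine le_csInf (exists_expGrowthSup_pressureSum_le_zero hB₁ hB₂) fun s ⟨hs₀, hs⟩ ↦ ?_
  exact ENNReal.toReal_le_of_le_ofReal hs₀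
    (dimH_largeBlockSet_le_of_expGrowthSup_le_zero hB₁ (by linarith) hs₀ M hs)

theorem upper_bound_U (m : ℕ) (hm : 2 ≤ m) (B₁ B₂ : ℝ)
    (hB₁ : 1 < B₁) (hB₂ : 1 < B₂) (hle : B₂ ≤ B₁) :
    dimH {x : ℝ | x ∈ Set.Ioo (0 : ℝ) 1 ∧ Irrational x ∧
      {n : ℕ | (1 ≤ ∏ i ∈ Finset.range (m - 1), (pq x (n + i) : ℝ) ∧
          ∏ i ∈ Finset.range (m - 1), (pq x (n + i) : ℝ) ≤ B₂ ^ n) ∧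
        B₁ ^ n / ∏ i ∈ Finset.range (m - 1), (pq x (n + i) : ℝ) ≤
          (pq x (n + (m - 1)) : ℝ)}.Infinite} ≤
    ENNReal.ofReal (gExp B₁ B₂) := by
  refine (dimH_mono ?_).trans (upper_bound_U_general (m - 1) hB₁ hB₂.le)
  exact fun x ⟨hx, irrational, infinite⟩ ↦
    ⟨⟨hx, irrational⟩, infinite.mono fun n h ↦ ⟨h.1.2, h.2⟩⟩
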